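/- Conversely, let U ⊆ ℝ² be a connected open rectangle and F, G : U → ℝ smooth with ∂_y F = ∂_x G. Then for each (x₀,y₀) ∈ U and each positive constant c there is a unique smooth positive function q on U with q(x₀,y₀) = c, ∂_x q = F q, and ∂_y q = G q. -/

import Mathlib

open Real Set

/-- Partial derivative of `f` in the `k`-th coordinate direction. -/
noncomputable def pd {n : ℕ} (f : (Fin n → ℝ) → ℝ) (k : Fin n) (p : Fin n → ℝ) : ℝ :=
  fderiv ℝ f p (Pi.single k 1)

/-- Christoffel symbols of the second kind of `g` (with inverse matrix field `ginv`). -/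
noncomputable def christoffel {n : ℕ} (g ginv : (Fin n → ℝ) → Matrix (Fin n) (Fin n) ℝ)
    (i j k : Fin n) (p : Fin n → ℝ) : ℝ :=
  (1 / 2) * ∑ m, ginv p i m *
    (pd (fun q => g q j m) k p + pd (fun q => g q k m) j p - pd (fun q => g q j k) m p)

/-- Riemann curvature tensor `R^i_{jkl}` of connection coefficients `Γ`. -/
noncomputable def riemann {n : ℕ} (Γ : Fin n → Fin n → Fin n → (Fin n → ℝ) → ℝ)
    (i j k l : Fin n) (p : Fin n → ℝ) : ℝ :=
  pd (Γ i j l) k p - pd (Γ i j k) l p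
    + (∑ m, Γ i m k p * Γ m j l p) - ∑ m, Γ i m l p * Γ m j k p

/-- Conversely, if `∂_y F = ∂ₓ G` on an open rectangle then the linear system
`qₓ = F q`, `q_y = G q` has a unique smooth positive solution with a prescribed
positive value at any base point. -/
theorem existence_uniqueness_integrating (a₁ b₁ a₂ b₂ : ℝ)
    (U : Set (Fin 2 → ℝ))
    (hUrect : U = {p : Fin 2 → ℝ | p 0 ∈ Ioo a₁ b₁ ∧ p 1 ∈ Ioo a₂ b₂})
    (F G : (Fin 2 → ℝ) → ℝ)
    (hF : ContDiffOn ℝ (⊤ : ℕ∞) F U) (hG : ContDiffOn ℝ (⊤ : ℕ∞) G U)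
    (hcompat : ∀ p ∈ U, pd F 1 p = pd G 0 p)
    (p₀ : Fin 2 → ℝ) (hp₀ : p₀ ∈ U) (c : ℝ) (hc : 0 < c) :
    ∃ q : (Fin 2 → ℝ) → ℝ,
      (ContDiffOn ℝ (⊤ : ℕ∞) q U ∧ (∀ p ∈ U, 0 < q p) ∧ q p₀ = c ∧
        (∀ p ∈ U, pd q 0 p = F p * q p) ∧ (∀ p ∈ U, pd q 1 p = G p * q p)) ∧
      ∀ q' : (Fin 2 → ℝ) → ℝ,
        (ContDiffOn ℝ (⊤ : ℕ∞) q' U ∧ (∀ p ∈ U, 0 < q' p) ∧ q' p₀ = c ∧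
          (∀ p ∈ U, pd q' 0 p = F p * q' p) ∧ (∀ p ∈ U, pd q' 1 p = G p * q' p)) →
        EqOn q q' U := by
  have hopen : IsOpen U := by
    subst hUrect
    exact (isOpen_Ioo.preimage (continuous_apply 0)).inter
      (isOpen_Ioo.preimage (continuous_apply 1))
  have hconv : Convex ℝ U := by
    subst hUrect
    exact ((convex_Ioo a₁ b₁).linear_preimage (LinearMap.proj (R := ℝ) (φ := fun _ : Fin 2 => ℝ) 0)).inter
      ((convex_Ioo a₂ b₂).linear_preimage (LinearMap.proj (R := ℝ) (φ := fun _ : Fin 2 => ℝ) 1))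
  have hdec : ∀ v : Fin 2 → ℝ, v = v 0 • Pi.single 0 1 + v 1 • Pi.single 1 1 := by
    intro v
    ext i
    fin_cases i <;> simp
  have hlin : ∀ (L : (Fin 2 → ℝ) →L[ℝ] ℝ) (v : Fin 2 → ℝ),
      L v = v 0 * L (Pi.single 0 1) + v 1 * L (Pi.single 1 1) := by
    intro L v
    conv_lhs => rw [hdec v]
    simp only [map_add, map_smul, smul_eq_mul]
  let d0 : (Fin 2 → ℝ) →L[ℝ] ℝ := ContinuousLinearMap.proj 0
  let d1 : (Fin 2 → ℝ) →L[ℝ] ℝ := ContinuousLinearMap.proj 1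
  let w : (Fin 2 → ℝ) → (Fin 2 → ℝ) →L[ℝ] ℝ := fun p => F p • d0 + G p • d1
  have hw : ContDiffOn ℝ (⊤ : ℕ∞) w U :=
    (hF.smul contDiffOn_const).add (hG.smul contDiffOn_const)
  have hFd : ∀ p ∈ U, DifferentiableAt ℝ F p := fun p hp =>
    (hF.differentiableOn (by simp)).differentiableAt (hopen.mem_nhds hp)
  have hGd : ∀ p ∈ U, DifferentiableAt ℝ G p := fun p hp =>
    (hG.differentiableOn (by simp)).differentiableAt (hopen.mem_nhds hp)
  obtain ⟨f, hf⟩ := hconv.exists_forall_hasFDerivAt_of_fderiv_symmetric hopen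
    (hw.differentiableOn (by simp)) (by
      intro p hp x y
      have h : HasFDerivAt w ((fderiv ℝ F p).smulRight d0 + (fderiv ℝ G p).smulRight d1) p :=
        ((hFd p hp).hasFDerivAt.smul_const d0).add ((hGd p hp).hasFDerivAt.smul_const d1)
      have hc' := hcompat p hp
      unfold pd at hc'
      rw [h.fderiv]
      simp only [add_apply, ContinuousLinearMap.smulRight_apply,
        smul_apply, smul_eq_mul]
      rw [hlin (fderiv ℝ F p) x, hlin (fderiv ℝ F p) y, hlin (fderiv ℝ G p) x,
        hlin (fderiv ℝ G p) y, hc']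
      simp only [d0, d1, ContinuousLinearMap.proj_apply]
      ring)
  have hfs : ContDiffOn ℝ (⊤ : ℕ∞) f U := by
    have := (contDiffOn_succ_iff_hasFDerivWithinAt_of_uniqueDiffOn (𝕜 := ℝ) (n := (⊤ : ℕ∞)) (f := f)
      hopen.uniqueDiffOn).2 ⟨by simp, w, hw, fun x hx => (hf x hx).hasFDerivWithinAt⟩
    simpa using this
  have hqd : ∀ p ∈ U, HasFDerivAt (fun p => c * Real.exp (f p - f p₀))
      ((c * Real.exp (f p - f p₀)) • w p) p := by
    intro p hp
    have := (((hf p hp).sub_const (f p₀)).exp).const_mul c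
    rwa [smul_smul] at this
  refine ⟨fun p => c * Real.exp (f p - f p₀), ⟨?_, ?_, ?_, ?_, ?_⟩, ?_⟩
  · exact contDiffOn_const.mul ((hfs.sub contDiffOn_const).exp)
  · intro p _
    positivity
  · simp
  · intro p hp
    unfold pd
    rw [(hqd p hp).fderiv]
    simp [w, d0, d1]
    ring
  · intro p hp
    unfold pd
    rw [(hqd p hp).fderiv]
    simp [w, d0, d1]
    ring
  · rintro q' ⟨hq', -, hq0, hqx, hqy⟩ p hp
    have hq'd : ∀ p ∈ U, HasFDerivAt q' (q' p • w p) p := by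
      intro p hp
      have h := ((hq'.differentiableOn (by simp)).differentiableAt (hopen.mem_nhds hp)).hasFDerivAt
      have e : fderiv ℝ q' p = q' p • w p := by
        ext v
        have h0 := hqx p hp
        have h1 := hqy p hp
        unfold pd at h0 h1
        rw [hlin, h0, h1]
        simp only [w, d0, d1, add_apply,
          smul_apply, smul_eq_mul, ContinuousLinearMap.proj_apply]
        ring
      rwa [e] at h
    have hz : ∀ p ∈ U, HasFDerivAt (fun p => q' p * Real.exp (-f p))
        (0 : (Fin 2 → ℝ) →L[ℝ] ℝ) p := by
      intro p hp
      refine ((hq'd p hp).mul ((hf p hp).neg.exp)).congr_fderiv ?_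
      ext v
      simp
      ring
    have hk := hopen.is_const_of_fderiv_eq_zero (𝕜 := ℝ) hconv.isPreconnected
      (fun p hp => (hz p hp).differentiableAt.differentiableWithinAt)
      (fun p hp => (hz p hp).fderiv) hp hp₀
    simp only [hq0] at hk
    show c * Real.exp (f p - f p₀) = q' p
    rw [sub_eq_add_neg, Real.exp_add, mul_left_comm, ← hk, mul_left_comm, ← Real.exp_add]
    simp
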